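/- Coprimality of the two Schur polynomials (key step of the lemma that a generic point of the secant variety lies on a unique secant line): Let 0 < i_1 < i_2 < i_3 < i_4 be integers with gcd(i_1, i_2, i_3, i_4) = 1. If S, S' ∈ ℂ[x_0, x_1, x_2, x_3] satisfy V·S = D_{i_1,i_2,i_3} and V·S' = D_{i_1,i_2,i_4}, then S and S' are relatively prime, i.e. every common divisor of S and S' in ℂ[x_0, x_1, x_2, x_3] is a unit. -/

import Mathlib

open MvPolynomial

/-- The Vandermonde polynomial `V = ∏_{0 ≤ p < q ≤ 3} (x_q − x_p)` in `ℂ[x_0,x_1,x_2,x_3]`. -/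
noncomputable def Vand : MvPolynomial (Fin 4) ℂ :=
  ∏ p : Fin 4, ∏ q : Fin 4, if p < q then (X q - X p) else 1

/-- The determinant `D_{a,b,c}` of the 4×4 generalized Vandermonde matrix whose row
indexed by `p` is `(1, x_p^a, x_p^b, x_p^c)`. -/
noncomputable def genVandDet (a b c : ℕ) : MvPolynomial (Fin 4) ℂ :=
  (Matrix.of fun p q : Fin 4 =>
    ![(1 : MvPolynomial (Fin 4) ℂ), X p ^ a, X p ^ b, X p ^ c] q).det

/-!
Any `n` of the `n + 1` columns of the matrix `(x_r ^ a_s)` satisfy the linear relations between its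
maximal minors, so an irreducible common factor `P` of two maximal minors divides all of them.
Such a `P` is a linear form `x_q - z x_p`, by induction on `n`: otherwise the leading and the
constant coefficient of `P` in `x_0` are units, because their irreducible factors are common factors
of the minors of a smaller matrix, hence linear forms, and alternants vanish only to first order
along such a form. But then the constant coefficient cannot depend on `x_1`, although `P` contains
a power of `x_1` by symmetry.

If `x_q - z x_p` divides all maximal minors and `a_0 = 0`, then `z ^ a_s = 1` for all `s`, so
`z = 1` when the exponents are coprime. Since alternants vanish only to first order along
`x_q = x_p`, this factor is used up by the Vandermonde determinant.
-/

section Permutation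

variable {ι : Type*} [DecidableEq ι] {p q : ι}

theorem perm_eq_one_or_eq_swap {σ : Equiv.Perm ι} (h : ∀ r, r ≠ p → r ≠ q → σ r = r) :
    σ = 1 ∨ σ = Equiv.swap p q := by
  have hp : σ p = p ∨ σ p = q := by
    by_contra! hne
    exact hne.1 (σ.injective (h _ hne.1 hne.2))
  have hq : σ q = p ∨ σ q = q := by
    by_contra! hne
    exact hne.2 (σ.injective (h _ hne.1 hne.2))
  have hpq : σ p = σ q → p = q := fun e => σ.injective e
  by_cases hfix : σ p = p
  · left
    refine Equiv.ext fun r => ?_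
    by_cases hrp : r = p
    · rwa [hrp]
    · by_cases hrq : r = q
      · subst hrq
        exact hq.resolve_left fun e => hrp (hpq (hfix.trans e.symm)).symm
      · exact h r hrp hrq
  · right
    ext r
    grind

end Permutation

section ScaledDiff

variable {ι κ R : Type*} [CommRing R] {p q : ι} {z : R}

/-- The linear form `x_q - z x_p`, which for `p ≠ q` vanishes exactly where `x_q = z x_p`. -/
noncomputable def scaledDiff (p q : ι) (z : R) : MvPolynomial ι R :=
  X q - C z * X p

theorem rename_scaledDiff (s : ι → κ) : rename s (scaledDiff p q z) = scaledDiff (s p) (s q) z := by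
  simp [scaledDiff]

theorem scaledDiff_ne_zero [Nontrivial R] (hpq : p ≠ q) : scaledDiff p q z ≠ 0 := by
  classical
  intro h
  have hcoeff := congrArg (coeff (Finsupp.single q 1)) h
  simp [scaledDiff, coeff_C_mul, coeff_X, Finsupp.single_left_inj, hpq] at hcoeff

variable [DecidableEq ι]

variable (p q z) in
/-- The substitution `x_q ↦ z x_p`, which restricts polynomials to the hyperplane
`scaledDiff p q z = 0`. -/
noncomputable def scaledSubst : MvPolynomial ι R →ₐ[R] MvPolynomial ι R :=
  aeval (Function.update X q (C z * X p))

theorem scaledSubst_X_self : scaledSubst p q z (X q) = C z * X p := by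
  simp [scaledSubst]

theorem scaledSubst_X_of_ne {r : ι} (h : r ≠ q) : scaledSubst p q z (X r) = X r := by
  simp [scaledSubst, h]

theorem scaledSubst_eq_zero_of_dvd (hpq : p ≠ q) {Q : MvPolynomial ι R}
    (h : scaledDiff p q z ∣ Q) : scaledSubst p q z Q = 0 := by
  obtain ⟨Q, rfl⟩ := h
  simp [scaledDiff, scaledSubst_X_of_ne hpq, scaledSubst_X_self, ← algebraMap_eq]

end ScaledDiff

section Alternant

variable {ι R : Type*} [Fintype ι] [DecidableEq ι] [CommRing R]

variable (R) in
/-- The generalized Vandermonde matrix `(x_r ^ a_s)` with exponents `a`. -/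
noncomputable def powerMatrix (a : ι → ℕ) : Matrix ι ι (MvPolynomial ι R) :=
  Matrix.of fun r s => X r ^ a s

variable (R) in
/-- The alternant `det (x_r ^ a_s)`, i.e. the generalized Vandermonde determinant with exponents
`a`. -/
noncomputable def alternant (a : ι → ℕ) : MvPolynomial ι R :=
  (powerMatrix R a).det

/-- The exponent vector of `∏ s, X (σ s) ^ a s` after the variable `x_q` has been merged into
`x_p`; these are the exponents of an alternant whose row `q` is written in terms of `x_p`. -/
noncomputable def mergedExponent (a : ι → ℕ) (p q : ι) (σ : Equiv.Perm ι) : ι →₀ ℕ :=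
  ∑ s, Finsupp.single (Function.update id q p (σ s)) (a s)

variable {p q : ι} {z : R} {a : ι → ℕ}

theorem mergedExponent_apply {r : ι} (hp : r ≠ p) (hq : r ≠ q) (σ : Equiv.Perm ι) :
    mergedExponent a p q σ r = a (σ.symm r) := by
  have hmem (s : ι) : Function.update id q p (σ s) = r ↔ s = σ.symm r := by
    rw [Equiv.eq_symm_apply, Function.update_apply]
    grind
  simp [mergedExponent, Finsupp.finsetSum_apply, Finsupp.single_apply, hmem]

theorem mergedExponent_swap_mul (σ : Equiv.Perm ι) :
    mergedExponent a p q (Equiv.swap p q * σ) = mergedExponent a p q σ := by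
  refine Finset.sum_congr rfl fun s _ => congrArg (Finsupp.single · (a s)) ?_
  simp only [Equiv.Perm.mul_apply, Function.update_apply, Equiv.swap_apply_def, id]
  grind

theorem eq_or_eq_swap_mul_of_mergedExponent_eq (ha : Function.Injective a) {σ τ : Equiv.Perm ι}
    (h : mergedExponent a p q σ = mergedExponent a p q τ) : σ = τ ∨ σ = Equiv.swap p q * τ := by
  have hfix : ∀ r, r ≠ p → r ≠ q → (τ * σ⁻¹) r = r := fun r hp hq => by
    have hr := DFunLike.congr_fun h r
    rw [mergedExponent_apply hp hq, mergedExponent_apply hp hq] at hr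
    rw [Equiv.Perm.mul_apply, Equiv.Perm.inv_def, ha hr, Equiv.apply_symm_apply]
  refine (perm_eq_one_or_eq_swap hfix).imp (mul_inv_eq_one.1 · |>.symm) fun hswap => ?_
  rw [mul_inv_eq_iff_eq_mul.1 hswap, ← mul_assoc, Equiv.swap_mul_self, one_mul]

theorem det_powerMatrix_updateRow (w : ι → R) :
    ((powerMatrix R a).updateRow q fun s => C (w s) * X p ^ a s).det =
      ∑ σ : Equiv.Perm ι, Equiv.Perm.sign σ •
        monomial (mergedExponent a p q σ) (w (σ.symm q)) := by
  have hentry (r s : ι) : (powerMatrix R a).updateRow q (fun s => C (w s) * X p ^ a s) r s =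
      monomial (Finsupp.single (Function.update id q p r) (a s)) 1 *
        C (if r = q then w s else 1) := by
    by_cases h : r = q
    · subst h; simp [X_pow_eq_monomial, mul_comm]
    · simp [h, powerMatrix, X_pow_eq_monomial]
  rw [Matrix.det_apply]
  refine Finset.sum_congr rfl fun σ _ => congrArg (Equiv.Perm.sign σ • ·) ?_
  simp_rw [hentry, Finset.prod_mul_distrib, ← monomial_sum_one, ← map_prod, ← Equiv.eq_symm_apply,
    Finset.prod_ite_eq', Finset.mem_univ, if_true]
  rw [mul_comm, C_mul_monomial, mul_one, mergedExponent]

theorem eq_of_det_updateRow_eq_zero (ha : Function.Injective a) (hpq : p ≠ q) {w : ι → R}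
    (h : ((powerMatrix R a).updateRow q fun s => C (w s) * X p ^ a s).det = 0) (i j : ι) :
    w i = w j := by
  obtain rfl | hij := eq_or_ne i j
  · rfl
  obtain ⟨τ, hi, hj⟩ := MulAction.is_two_pretransitive_iff.1
    (Equiv.Perm.isMultiplyPretransitive ι 2) hij hpq
  simp only [Equiv.Perm.smul_def] at hi hj
  have hne : τ ≠ Equiv.swap p q * τ := fun he => hpq <| by
    simpa [hi] using DFunLike.congr_fun he i
  have hcoeff := congrArg (coeff (mergedExponent a p q τ)) h
  rw [det_powerMatrix_updateRow, coeff_sum, Fintype.sum_eq_add _ _ hne] at hcoeff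
  · have hqj : τ.symm q = j := by simp [← hj]
    have hswap : (Equiv.swap p q * τ).symm q = i := by simp [Equiv.symm_apply_eq, hi]
    rw [mergedExponent_swap_mul, coeff_smul, coeff_smul, coeff_monomial, coeff_monomial,
      if_pos rfl, if_pos rfl, map_mul, Equiv.Perm.sign_swap hpq, hqj, hswap, neg_one_mul,
      Units.smul_def, Units.smul_def] at hcoeff
    obtain hτ | hτ := Int.units_eq_one_or (Equiv.Perm.sign τ)
    · simpa [hτ, ← sub_eq_add_neg, sub_eq_zero, eq_comm] using hcoeff
    · simpa [hτ, neg_add_eq_zero, eq_comm] using hcoeff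
  · rintro σ ⟨hτ, hswap⟩
    rw [coeff_smul, coeff_monomial, if_neg, smul_zero]
    exact fun he => (eq_or_eq_swap_mul_of_mergedExponent_eq ha he).elim hτ hswap

theorem scaledSubst_det_updateRow (v : ι → MvPolynomial ι R) :
    scaledSubst p q z ((powerMatrix R a).updateRow q v).det =
      ((powerMatrix R a).updateRow q fun s => scaledSubst p q z (v s)).det := by
  rw [AlgHom.map_det]
  congr 1
  ext1 r s
  by_cases h : r = q
  · subst h; simp
  · simp [h, powerMatrix, scaledSubst_X_of_ne]

theorem pow_eq_pow_of_scaledDiff_dvd_alternant (ha : Function.Injective a) (hpq : p ≠ q)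
    (h : scaledDiff p q z ∣ alternant R a) (i j : ι) : z ^ a i = z ^ a j := by
  have hzero := scaledSubst_eq_zero_of_dvd hpq h
  rw [alternant, ← Matrix.updateRow_eq_self (powerMatrix R a) q,
    scaledSubst_det_updateRow] at hzero
  refine eq_of_det_updateRow_eq_zero ha hpq (w := fun s => z ^ a s) ?_ i j
  simpa [powerMatrix, scaledSubst_X_self, mul_pow] using hzero

variable (p q z a) in
/-- The cofactor of `scaledDiff p q z` in an alternant divisible by it. -/
noncomputable def scaledDiffCofactor : MvPolynomial ι R :=
  ((powerMatrix R a).updateRow q fun s =>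
    ∑ k ∈ Finset.range (a s), X q ^ k * (C z * X p) ^ (a s - 1 - k)).det

theorem alternant_eq_scaledDiff_mul (hpq : p ≠ q) (h : ∀ i j, z ^ a i = z ^ a j) :
    alternant R a = scaledDiff p q z * scaledDiffCofactor p q z a := by
  rw [alternant, ← Matrix.det_updateRow_add_smul_self _ hpq.symm (-C (z ^ a q)),
    scaledDiffCofactor, ← Matrix.det_updateRow_smul]
  congr 2
  ext1 s
  simp only [Pi.add_apply, Pi.smul_apply, smul_eq_mul, powerMatrix, Matrix.of_apply]
  rw [scaledDiff, (Commute.all _ _).mul_geom_sum₂, mul_pow, ← C_pow, h q s]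
  ring

theorem scaledDiff_dvd_alternant (hpq : p ≠ q) (h : ∀ i j, z ^ a i = z ^ a j) :
    scaledDiff p q z ∣ alternant R a :=
  ⟨_, alternant_eq_scaledDiff_mul hpq h⟩

theorem mul_scaledSubst_scaledDiffCofactor (hpq : p ≠ q) :
    C z * X p * scaledSubst p q z (scaledDiffCofactor p q z a) =
      ((powerMatrix R a).updateRow q fun s => C (a s * z ^ a s) * X p ^ a s).det := by
  rw [scaledDiffCofactor, scaledSubst_det_updateRow, ← Matrix.det_updateRow_smul]
  congr 2
  ext1 s
  have hC : scaledSubst p q z (C z) = C z := algHom_C _ _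
  simp only [Pi.smul_apply, smul_eq_mul, map_sum, map_mul, map_pow, hC, scaledSubst_X_self,
    scaledSubst_X_of_ne hpq]
  rw [geom_sum₂_self, map_natCast]
  obtain h0 | h0 := Nat.eq_zero_or_pos (a s)
  · simp [h0]
  · rw [mul_left_comm, mul_pow_sub_one h0.ne', mul_pow, mul_assoc]

theorem not_scaledDiff_sq_dvd_alternant [IsDomain R] [CharZero R] (ha : Function.Injective a)
    (hpq : p ≠ q) (hz : z ≠ 0) : ¬ scaledDiff p q z ^ 2 ∣ alternant R a := by
  intro h
  have hpow := pow_eq_pow_of_scaledDiff_dvd_alternant ha hpq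
    ((dvd_pow_self _ two_ne_zero).trans h)
  rw [alternant_eq_scaledDiff_mul hpq hpow, sq,
    mul_dvd_mul_iff_left (scaledDiff_ne_zero hpq)] at h
  have hdet := mul_scaledSubst_scaledDiffCofactor (z := z) (a := a) hpq
  rw [scaledSubst_eq_zero_of_dvd hpq h, mul_zero] at hdet
  have hmul := eq_of_det_updateRow_eq_zero ha hpq hdet.symm p q
  rw [hpow p q] at hmul
  exact hpq (ha (Nat.cast_injective (mul_right_cancel₀ (pow_ne_zero _ hz) hmul)))

theorem map_alternant {R' : Type*} [CommRing R'] (f : R →+* R') (a : ι → ℕ) :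
    map f (alternant R a) = alternant R' a := by
  rw [alternant, RingHom.map_det]
  congr 1
  ext1 r s
  simp [powerMatrix]

theorem alternant_rename_associated (s : Equiv.Perm ι) :
    Associated (rename s (alternant R a)) (alternant R a) := by
  have hperm : (rename s).mapMatrix (powerMatrix R a) = (powerMatrix R a).submatrix s id := by
    ext1 i j
    simp [powerMatrix]
  rw [alternant, AlgHom.map_det, hperm, Matrix.det_permute]
  obtain h | h := Int.units_eq_one_or (Equiv.Perm.sign s) <;> simp [h]

theorem alternant_add_const (c : ℕ) :
    alternant R (fun s => a s + c) = (∏ r, X r ^ c) * alternant R a := by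
  rw [alternant, alternant, ← Matrix.det_mul_column]
  congr 1
  ext1 r s
  simp [powerMatrix, pow_add, mul_comm]

end Alternant

theorem associated_neg_one_pow_mul {R : Type*} [CommRing R] (k : ℕ) (x : R) :
    Associated ((-1) ^ k * x) x := by
  obtain h | h := neg_one_pow_eq_or R k <;> simp [h]

section FinAlternant

variable {R : Type*} [CommRing R] {n : ℕ}

theorem det_vandermonde_X_eq_alternant :
    (Matrix.vandermonde (X : Fin n → MvPolynomial (Fin n) R)).det = alternant R Fin.val :=
  rfl

theorem finSuccEquiv_scaledDiff (p q : Fin n) (z : R) :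
    finSuccEquiv R n (scaledDiff p.succ q.succ z) = Polynomial.C (scaledDiff p q z) := by
  simp [scaledDiff, finSuccEquiv_apply]

theorem finSuccEquiv_alternant (a : Fin (n + 1) → ℕ) :
    finSuccEquiv R n (alternant R a) = ∑ j : Fin (n + 1),
      Polynomial.monomial (a j) ((-1) ^ (j : ℕ) * alternant R (a ∘ j.succAbove)) := by
  rw [alternant, Matrix.det_succ_row_zero, map_sum]
  refine Finset.sum_congr rfl fun j _ => ?_
  have hminor : finSuccEquiv R n ((powerMatrix R a).submatrix Fin.succ j.succAbove).det =
      Polynomial.C (alternant R (a ∘ j.succAbove)) := by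
    rw [alternant, AlgEquiv.map_det, RingHom.map_det]
    congr 1
    ext1 r s
    simp [powerMatrix, finSuccEquiv_X_succ]
  rw [map_mul, hminor, ← Polynomial.C_mul_X_pow_eq_monomial]
  simp only [powerMatrix, Matrix.of_apply, map_mul, map_pow, finSuccEquiv_X_zero, map_neg, map_one]
  ring

variable {a : Fin (n + 1) → ℕ}

theorem coeff_finSuccEquiv_alternant (ha : Function.Injective a) (j : Fin (n + 1)) :
    (finSuccEquiv R n (alternant R a)).coeff (a j) =
      (-1) ^ (j : ℕ) * alternant R (a ∘ j.succAbove) := by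
  rw [finSuccEquiv_alternant, Polynomial.finsetSum_coeff, Fintype.sum_eq_single j]
  · exact Polynomial.coeff_monomial_same _ _
  · exact fun i hij => Polynomial.coeff_monomial_of_ne _ (ha.ne hij.symm)

theorem coeff_zero_finSuccEquiv_alternant (ha : Function.Injective a) (ha0 : a 0 = 0) :
    (finSuccEquiv R n (alternant R a)).coeff 0 = alternant R (a ∘ Fin.succ) := by
  have h := coeff_finSuccEquiv_alternant (R := R) ha 0
  rwa [ha0, Fin.val_zero, pow_zero, one_mul, Fin.succAbove_zero] at h

theorem alternant_ne_zero [Nontrivial R] {n : ℕ} {a : Fin n → ℕ} (ha : Function.Injective a) :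
    alternant R a ≠ 0 := by
  induction n with
  | zero => simp [alternant]
  | succ n ih =>
    intro h
    have hcoeff := coeff_finSuccEquiv_alternant (R := R) ha 0
    rw [h, map_zero, Polynomial.coeff_zero, Fin.val_zero, pow_zero, one_mul] at hcoeff
    exact ih (ha.comp Fin.succAbove_right_injective) hcoeff.symm

theorem leadingCoeff_finSuccEquiv_alternant_associated [Nontrivial R] (ha : StrictMono a) :
    Associated (finSuccEquiv R n (alternant R a)).leadingCoeff
      (alternant R (a ∘ Fin.castSucc)) := by
  have hcoeff := coeff_finSuccEquiv_alternant (R := R) ha.injective (Fin.last n)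
  rw [Fin.succAbove_last] at hcoeff
  have hassoc := associated_neg_one_pow_mul (Fin.last n : ℕ) (alternant R (a ∘ Fin.castSucc))
  have hdegree : (finSuccEquiv R n (alternant R a)).natDegree = a (Fin.last n) := by
    refine le_antisymm ?_ (Polynomial.le_natDegree_of_ne_zero ?_)
    · rw [finSuccEquiv_alternant]
      exact Polynomial.natDegree_sum_le_of_forall_le _ _ fun j _ =>
        (Polynomial.natDegree_monomial_le _).trans (ha.monotone (Fin.le_last j))
    · rw [hcoeff, hassoc.ne_zero_iff]
      exact alternant_ne_zero (ha.comp Fin.strictMono_castSucc).injective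
  rwa [Polynomial.leadingCoeff, hdegree, hcoeff]

end FinAlternant

section Minors

theorem dvd_det_mul_of_dvd_mulVec {m S : Type*} [Fintype m] [DecidableEq m] [CommRing S]
    {B : Matrix m m S} {v : m → S} {d : S} (h : ∀ i, d ∣ B.mulVec v i) (k : m) :
    d ∣ B.det * v k := by
  have hadj : B.adjugate.mulVec (B.mulVec v) = B.det • v := by
    rw [Matrix.mulVec_mulVec, Matrix.adjugate_mul, Matrix.smul_mulVec, Matrix.one_mulVec]
  rw [← smul_eq_mul, ← Pi.smul_apply, ← hadj]
  exact Finset.dvd_sum fun i _ => (h i).mul_left _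

theorem vars_subset_vars_of_dvd {σ R : Type*} [CommRing R] [IsDomain R]
    {P Q : MvPolynomial σ R} (h : P ∣ Q) (hQ : Q ≠ 0) : P.vars ⊆ Q.vars := by
  obtain ⟨T, rfl⟩ := h
  intro r
  rw [mem_vars_iff_degreeOf_ne_zero, mem_vars_iff_degreeOf_ne_zero,
    degreeOf_mul_eq (left_ne_zero_of_mul hQ) (right_ne_zero_of_mul hQ)]
  lia

theorem isUnit_of_forall_dvd_rename_succAbove {K : Type*} [Field K] {n : ℕ}
    {P : MvPolynomial (Fin (n + 1)) K} {G : MvPolynomial (Fin n) K} (hG : G ≠ 0)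
    (h : ∀ r : Fin (n + 1), P ∣ rename r.succAbove G) : IsUnit P := by
  have hne (r : Fin (n + 1)) : rename r.succAbove G ≠ 0 :=
    (map_ne_zero_iff _ (rename_injective _ Fin.succAbove_right_injective)).2 hG
  have hvars : P.vars = ∅ := Finset.eq_empty_of_forall_notMem fun r hr => by
    obtain ⟨i, -, hi⟩ := mem_vars_rename _ _ (vars_subset_vars_of_dvd (h r) (hne r) hr)
    exact Fin.succAbove_ne r i hi
  have hP := ne_zero_of_dvd_ne_zero (hne 0) (h 0)
  rw [vars_eq_empty_iff_eq_C] at hvars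
  rw [hvars] at hP ⊢
  exact (IsUnit.mk0 _ (C_ne_zero.1 hP)).map C

theorem sum_alternant_succAbove_mul {R : Type*} [CommRing R] {n : ℕ} (a : Fin (n + 1) → ℕ)
    (r : Fin n) :
    ∑ j : Fin (n + 1), X r ^ a j * ((-1) ^ (j : ℕ) * alternant R (a ∘ j.succAbove)) = 0 := by
  let N : Matrix (Fin (n + 1)) (Fin (n + 1)) (MvPolynomial (Fin n) R) :=
    Matrix.of fun s j => (Fin.cons (X r) X : Fin (n + 1) → MvPolynomial (Fin n) R) s ^ a j
  have hdet : N.det = 0 :=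
    Matrix.det_zero_of_row_eq (Fin.succ_ne_zero r).symm (by funext j; simp [N])
  rw [Matrix.det_succ_row_zero] at hdet
  rw [← hdet]
  exact Finset.sum_congr rfl fun j _ => by
    rw [mul_left_comm, ← mul_assoc]
    rfl

theorem dvd_rename_alternant_mul_of_dvd_of_dvd {R : Type*} [CommRing R] {n : ℕ}
    {a : Fin (n + 2) → ℕ} {P : MvPolynomial (Fin (n + 1)) R} {i : Fin (n + 2)} {j : Fin (n + 1)}
    (hi : P ∣ alternant R (a ∘ i.succAbove))
    (hj : P ∣ alternant R (a ∘ (i.succAbove j).succAbove)) (k : Fin n) (r : Fin (n + 1)) :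
    P ∣ rename r.succAbove (alternant R (a ∘ i.succAbove ∘ j.succAbove)) *
      alternant R (a ∘ (i.succAbove (j.succAbove k)).succAbove) := by
  let e : Fin n → Fin (n + 2) := i.succAbove ∘ j.succAbove
  let v : Fin n → MvPolynomial (Fin (n + 1)) R := fun s =>
    (-1) ^ (e s : ℕ) * alternant R (a ∘ (e s).succAbove)
  have hrelation (t : Fin (n + 1)) : P ∣ ∑ s, X t ^ a (e s) * v s := by
    have hsum := sum_alternant_succAbove_mul (R := R) a t
    rw [Fin.sum_univ_succAbove _ i, Fin.sum_univ_succAbove _ j] at hsum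
    have hzero := dvd_zero P
    rwa [← hsum, dvd_add_right ((hi.mul_left _).mul_left _),
      dvd_add_right ((hj.mul_left _).mul_left _)] at hzero
  have hdet : rename r.succAbove (alternant R (a ∘ e)) =
      ((rename r.succAbove).mapMatrix (powerMatrix R (a ∘ e))).det := AlgHom.map_det _ _
  have hdvd := dvd_det_mul_of_dvd_mulVec (d := P) (v := v)
    (B := (rename r.succAbove).mapMatrix (powerMatrix R (a ∘ e)))
    (fun t => by simpa [Matrix.mulVec, dotProduct, powerMatrix] using hrelation (r.succAbove t)) k
  rw [← hdet, mul_left_comm] at hdvd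
  exact (associated_neg_one_pow_mul _ _).dvd_iff_dvd_right.1 hdvd

theorem dvd_alternant_succAbove_of_dvd_of_dvd {K : Type*} [Field K] {n : ℕ}
    {a : Fin (n + 1) → ℕ} (ha : Function.Injective a) {P : MvPolynomial (Fin n) K}
    (hP : Irreducible P) {i j : Fin (n + 1)} (hij : i ≠ j)
    (hi : P ∣ alternant K (a ∘ i.succAbove)) (hj : P ∣ alternant K (a ∘ j.succAbove))
    (k : Fin (n + 1)) : P ∣ alternant K (a ∘ k.succAbove) := by
  obtain ⟨j, rfl⟩ := Fin.exists_succAbove_eq hij.symm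
  obtain rfl | hki := eq_or_ne k i
  · exact hi
  obtain ⟨k, rfl⟩ := Fin.exists_succAbove_eq hki
  obtain rfl | hkj := eq_or_ne k j
  · exact hj
  obtain _ | n := n
  · exact j.elim0
  obtain ⟨k, rfl⟩ := Fin.exists_succAbove_eq hkj
  by_contra hk
  refine hP.not_isUnit (isUnit_of_forall_dvd_rename_succAbove
    (G := alternant K (a ∘ i.succAbove ∘ j.succAbove)) (alternant_ne_zero ?_) fun r => ?_)
  · exact ha.comp (Fin.succAbove_right_injective.comp Fin.succAbove_right_injective)
  · exact (hP.prime.dvd_or_dvd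
      (dvd_rename_alternant_mul_of_dvd_of_dvd hi hj k r)).resolve_right hk

end Minors

section Classification

theorem scaledDiff_irreducible {ι R : Type*} [CommRing R] [IsDomain R] {p q : ι} (hpq : p ≠ q)
    {z : R} : Irreducible (scaledDiff p q z) := by
  have hq : q ∉ (-(C z * X p) : MvPolynomial ι R).vars := by
    classical
    rw [vars_neg]
    intro hq
    have hmem := vars_mul _ _ hq
    rw [vars_C, vars_X, Finset.empty_union, Finset.mem_singleton] at hmem
    exact hpq hmem.symm
  have h := irreducible_mul_X_add 1 _ q one_ne_zero (by simp) hq isRelPrime_one_left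
  rwa [one_mul, ← sub_eq_add_neg] at h

theorem pow_eq_pow_of_scaledDiff_dvd_alternant_succAbove {R : Type*} [CommRing R] {n : ℕ}
    {a : Fin (n + 1) → ℕ} (ha : Function.Injective a) {p q : Fin n} (hpq : p ≠ q) {z : R}
    (h : ∀ i : Fin (n + 1), scaledDiff p q z ∣ alternant R (a ∘ i.succAbove))
    (i j : Fin (n + 1)) : z ^ a i = z ^ a j := by
  obtain ⟨k, hki, hkj⟩ := Fin.exists_ne_and_ne_of_two_lt i j (by lia)
  obtain ⟨i, rfl⟩ := Fin.exists_succAbove_eq hki.symm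
  obtain ⟨j, rfl⟩ := Fin.exists_succAbove_eq hkj.symm
  exact pow_eq_pow_of_scaledDiff_dvd_alternant (ha.comp Fin.succAbove_right_injective) hpq
    (h k) i j

variable {K : Type*} [Field K]

/-- `P` divides one of the linear forms `x_q - z x_p` with `p ≠ q`. As `z = 0` is allowed, these
include the variables. -/
def DvdScaledDiff {ι R : Type*} [CommRing R] (P : MvPolynomial ι R) : Prop :=
  ∃ p q, p ≠ q ∧ ∃ z, P ∣ scaledDiff p q z

/-- `P` is a common irreducible factor of the alternants obtained from `a` by omitting one
exponent, i.e. of the maximal minors of the `n × (n + 1)` matrix `(x_r ^ a_s)`. -/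
structure IsMinorFactor {R : Type*} [CommRing R] {n : ℕ} (a : Fin (n + 1) → ℕ)
    (P : MvPolynomial (Fin n) R) : Prop where
  irreducible : Irreducible P
  dvd_alternant (i : Fin (n + 1)) : P ∣ alternant R (a ∘ i.succAbove)

variable (K) in
/-- The classification of common factors of maximal minors in `n` variables: when the exponents
start at `0`, they are all linear forms `x_q - z x_p`. -/
def MinorFactorsDvdScaledDiff (n : ℕ) : Prop :=
  ∀ ⦃a : Fin (n + 1) → ℕ⦄, StrictMono a → a 0 = 0 →
    ∀ ⦃P : MvPolynomial (Fin n) K⦄, IsMinorFactor a P → DvdScaledDiff P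

theorem not_dvdScaledDiff_rename {ι R : Type*} [CommRing R] {P : MvPolynomial ι R}
    (s : Equiv.Perm ι) (hP : ¬ DvdScaledDiff P) : ¬ DvdScaledDiff (rename s P) := by
  rintro ⟨p, q, hpq, z, h⟩
  refine hP ⟨s.symm p, s.symm q, s.symm.injective.ne hpq, z, ?_⟩
  have hdvd := map_dvd (rename s.symm) h
  rwa [rename_scaledDiff, rename_rename, Equiv.symm_comp_self, rename_id, AlgHom.id_apply] at hdvd

theorem IsMinorFactor.rename {R : Type*} [CommRing R] {n : ℕ} {a : Fin (n + 1) → ℕ}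
    {P : MvPolynomial (Fin n) R} (h : IsMinorFactor a P) (s : Equiv.Perm (Fin n)) :
    IsMinorFactor a (rename s P) where
  irreducible := (MulEquiv.irreducible_iff (renameEquiv R s)).2 h.irreducible
  dvd_alternant i :=
    (alternant_rename_associated s).dvd_iff_dvd_right.1 (map_dvd _ (h.dvd_alternant i))

theorem not_X_dvd_of_not_dvdScaledDiff {ι R : Type*} [Nontrivial ι] [CommRing R] [IsDomain R]
    {P : MvPolynomial ι R} (hP : Irreducible P) (hPl : ¬ DvdScaledDiff P) (r : ι) : ¬ X r ∣ P := by
  intro hdvd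
  obtain ⟨p, hp⟩ := exists_ne r
  refine hPl ⟨p, r, hp, 0, ?_⟩
  rw [scaledDiff, C_0, zero_mul, sub_zero]
  exact (X_prime.irreducible.associated_of_dvd hP hdvd).symm.dvd

variable {n : ℕ}

/-- This is applied to the leading and to the constant coefficient `f`. A linear factor `l` of `f P`
divides all minors of `b`, so `alternant b = l * T` with `P ∣ T`, and `l` divides
`f (alternant b)` twice. -/
theorem isUnit_map_finSuccEquiv_of_dvd_alternant [CharZero K] (ih : MinorFactorsDvdScaledDiff K n)
    {b : Fin (n + 1) → ℕ} (hb : StrictMono b) (hb0 : b 0 = 0)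
    {P : MvPolynomial (Fin (n + 1)) K} (hP : Irreducible P) (hPl : ¬ DvdScaledDiff P)
    (hPb : P ∣ alternant K b)
    (f : Polynomial (MvPolynomial (Fin n) K) →* MvPolynomial (Fin n) K)
    (hfC : ∀ Q, f (Polynomial.C Q) = Q) {c : Fin n → ℕ} (hc : Function.Injective c)
    (hfb : Associated (f (finSuccEquiv K n (alternant K b))) (alternant K c))
    (hdvd : ∀ i : Fin (n + 1), f (finSuccEquiv K n P) ∣ alternant K (b ∘ i.succAbove)) :
    IsUnit (f (finSuccEquiv K n P)) := by
  by_contra hunit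
  have hne : f (finSuccEquiv K n P) ≠ 0 := ne_zero_of_dvd_ne_zero
    (alternant_ne_zero (hb.injective.comp Fin.succAbove_right_injective)) (hdvd 0)
  obtain ⟨Q, hQ, hQP⟩ := WfDvdMonoid.exists_irreducible_factor hunit hne
  obtain ⟨p, q, hpq, z, hQl⟩ := ih hb hb0 ⟨hQ, fun i => hQP.trans (hdvd i)⟩
  have hlP : scaledDiff p q z ∣ f (finSuccEquiv K n P) :=
    (hQ.associated_of_dvd (scaledDiff_irreducible hpq) hQl).dvd_iff_dvd_left.1 hQP
  have hpow := pow_eq_pow_of_scaledDiff_dvd_alternant_succAbove hb.injective hpq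
    fun i => hlP.trans (hdvd i)
  have hz : z ≠ 0 := by
    rintro rfl
    have h := hpow p.succ 0
    rw [hb0, zero_pow (hb0 ▸ hb p.succ_pos).ne', pow_zero] at h
    exact zero_ne_one h
  have hpq' : p.succ ≠ q.succ := Fin.succ_injective _ |>.ne hpq
  obtain ⟨T, hT⟩ := scaledDiff_dvd_alternant hpq' hpow
  have hPT : P ∣ T :=
    (hP.prime.dvd_or_dvd (hT ▸ hPb)).resolve_left fun h => hPl ⟨_, _, hpq', z, h⟩
  refine not_scaledDiff_sq_dvd_alternant hc hpq hz (hfb.dvd_iff_dvd_right.1 ?_)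
  rw [hT, map_mul, map_mul, finSuccEquiv_scaledDiff, hfC, sq]
  exact mul_dvd_mul_left _ (hlP.trans (map_dvd f (map_dvd _ hPT)))

theorem IsMinorFactor.isUnit_leadingCoeff_finSuccEquiv [CharZero K]
    (ih : MinorFactorsDvdScaledDiff K n) {a : Fin (n + 2) → ℕ} (ha : StrictMono a) (ha0 : a 0 = 0)
    {P : MvPolynomial (Fin (n + 1)) K} (h : IsMinorFactor a P) (hP : ¬ DvdScaledDiff P) :
    IsUnit (finSuccEquiv K n P).leadingCoeff := by
  have hb : StrictMono (a ∘ Fin.castSucc) := ha.comp Fin.strictMono_castSucc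
  refine isUnit_map_finSuccEquiv_of_dvd_alternant ih hb ha0 h.irreducible hP ?_
    Polynomial.leadingCoeffHom Polynomial.leadingCoeff_C
    (hb.comp Fin.strictMono_castSucc).injective
    (leadingCoeff_finSuccEquiv_alternant_associated hb) fun i => ?_
  · simpa only [Fin.succAbove_last] using h.dvd_alternant (Fin.last _)
  · have hcomp : (a ∘ Fin.castSucc) ∘ i.succAbove = (a ∘ i.castSucc.succAbove) ∘ Fin.castSucc := by
      funext s
      simp only [Function.comp_apply, Fin.castSucc_succAbove_castSucc]
    rw [hcomp]
    exact (leadingCoeff_finSuccEquiv_alternant_associated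
      (ha.comp (Fin.strictMono_succAbove _))).dvd_iff_dvd_right.1
        (map_dvd Polynomial.leadingCoeffHom (map_dvd _ (h.dvd_alternant i.castSucc)))

theorem IsMinorFactor.exists_coeff_single_zero_ne_zero [CharZero K]
    (ih : MinorFactorsDvdScaledDiff K n) {a : Fin (n + 2) → ℕ} (ha : StrictMono a) (ha0 : a 0 = 0)
    {P : MvPolynomial (Fin (n + 1)) K} (h : IsMinorFactor a P) (hP : ¬ DvdScaledDiff P) :
    ∃ d ≠ 0, coeff (Finsupp.single 0 d) P ≠ 0 := by
  have hunit := h.isUnit_leadingCoeff_finSuccEquiv ih ha ha0 hP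
  refine ⟨(finSuccEquiv K n P).natDegree, fun hdegree => h.irreducible.not_isUnit ?_, ?_⟩
  · rw [← MulEquiv.isUnit_map (finSuccEquiv K n), Polynomial.eq_C_of_natDegree_eq_zero hdegree]
    rw [Polynomial.leadingCoeff, hdegree] at hunit
    exact hunit.map Polynomial.C
  · rw [← Finsupp.cons_zero_eq_single_zero, ← finSuccEquiv_coeff_coeff]
    exact (hunit.map constantCoeff).ne_zero

theorem IsMinorFactor.exists_coeff_single_ne_zero [CharZero K]
    (ih : MinorFactorsDvdScaledDiff K n) {a : Fin (n + 2) → ℕ} (ha : StrictMono a) (ha0 : a 0 = 0)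
    {P : MvPolynomial (Fin (n + 1)) K} (h : IsMinorFactor a P) (hP : ¬ DvdScaledDiff P)
    (k : Fin (n + 1)) : ∃ d ≠ 0, coeff (Finsupp.single k d) P ≠ 0 := by
  obtain ⟨d, hd, hcoeff⟩ := (h.rename (Equiv.swap k 0)).exists_coeff_single_zero_ne_zero ih ha ha0
    (not_dvdScaledDiff_rename _ hP)
  refine ⟨d, hd, ?_⟩
  have hswap : Finsupp.single 0 d = Finsupp.mapDomain (Equiv.swap k 0) (Finsupp.single k d) := by
    rw [Finsupp.mapDomain_single, Equiv.swap_apply_left]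
  rwa [hswap, coeff_rename_mapDomain _ (Equiv.swap k 0).injective] at hcoeff

theorem IsMinorFactor.exists_coeff_single_coeff_zero_ne_zero [CharZero K]
    (ih : MinorFactorsDvdScaledDiff K n) {a : Fin (n + 2) → ℕ} (ha : StrictMono a) (ha0 : a 0 = 0)
    {P : MvPolynomial (Fin (n + 1)) K} (h : IsMinorFactor a P) (hP : ¬ DvdScaledDiff P)
    (k : Fin n) : ∃ d ≠ 0, coeff (Finsupp.single k d) ((finSuccEquiv K n P).coeff 0) ≠ 0 := by
  obtain ⟨d, hd, hcoeff⟩ := h.exists_coeff_single_ne_zero ih ha ha0 hP k.succ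
  refine ⟨d, hd, ?_⟩
  rwa [finSuccEquiv_coeff_coeff, Finsupp.cons_zero_single_eq_single_succ]

theorem not_X_dvd_of_coeff_single_ne_zero {σ R : Type*} [CommSemiring R] {i k : σ} (hik : i ≠ k)
    {d : ℕ} {Q : MvPolynomial σ R} (h : coeff (Finsupp.single k d) Q ≠ 0) : ¬ X i ∣ Q := by
  classical
  rintro ⟨T, rfl⟩
  rw [coeff_X_mul', if_neg] at h
  · exact h rfl
  · exact fun hi => hik (Finset.mem_singleton.1 (Finsupp.support_single_subset hi))

theorem isRelPrime_prod_X_pow {σ : Type*} [Fintype σ] {Q : MvPolynomial σ K}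
    (h : ∀ i, ¬ X i ∣ Q) (c : ℕ) : IsRelPrime Q (∏ i, X i ^ c) :=
  IsRelPrime.prod_right fun i _ =>
    (X_prime.irreducible.isRelPrime_iff_not_dvd.2 (h i)).symm.pow_right

theorem alternant_comp_succ_comp {R : Type*} [CommRing R] {m : ℕ} {a : Fin (n + 2) → ℕ}
    (ha : Monotone a) (e : Fin m → Fin (n + 1)) :
    alternant R (a ∘ Fin.succ ∘ e) =
      (∏ r, X r ^ a 1) * alternant R ((fun s => a s.succ - a 1) ∘ e) := by
  rw [← alternant_add_const]
  congr 1
  funext s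
  exact (Nat.sub_add_cancel (ha (Fin.one_le_of_ne_zero (e s).succ_ne_zero))).symm

theorem IsMinorFactor.isUnit_coeff_zero_finSuccEquiv [CharZero K] (hn : 2 ≤ n)
    (ih : MinorFactorsDvdScaledDiff K n) {a : Fin (n + 2) → ℕ} (ha : StrictMono a) (ha0 : a 0 = 0)
    {P : MvPolynomial (Fin (n + 1)) K} (h : IsMinorFactor a P) (hP : ¬ DvdScaledDiff P) :
    IsUnit ((finSuccEquiv K n P).coeff 0) := by
  have : Nontrivial (Fin n) := Fin.nontrivial_iff_two_le.2 hn
  have : Nontrivial (Fin (n + 1)) := Fin.nontrivial_iff_two_le.2 (by lia)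
  have hXt (r : Fin n) : ¬ X r ∣ (finSuccEquiv K n P).coeff 0 := by
    obtain ⟨k, hk⟩ := exists_ne r
    obtain ⟨d, -, hd⟩ := h.exists_coeff_single_coeff_zero_ne_zero ih ha ha0 hP k
    exact not_X_dvd_of_coeff_single_ne_zero hk.symm hd
  have hb : StrictMono fun s : Fin (n + 1) => a s.succ - a 1 := fun s t hst =>
    Nat.sub_lt_sub_right (ha.monotone (Fin.one_le_of_ne_zero s.succ_ne_zero))
      (ha (Fin.succ_lt_succ_iff.2 hst))
  have hb0 : a (Fin.succ (0 : Fin (n + 1))) - a 1 = 0 := Nat.sub_self _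
  refine isUnit_map_finSuccEquiv_of_dvd_alternant ih hb hb0 h.irreducible hP ?_
    (RingHom.toMonoidHom Polynomial.constantCoeff) (fun _ => Polynomial.coeff_C_zero)
    (hb.comp Fin.strictMono_succ).injective
    (Associated.of_eq (coeff_zero_finSuccEquiv_alternant hb.injective hb0)) fun i => ?_
  · have hdvd := h.dvd_alternant 0
    rw [Fin.succAbove_zero, ← Function.comp_id Fin.succ,
      alternant_comp_succ_comp ha.monotone] at hdvd
    have hX := not_X_dvd_of_not_dvdScaledDiff h.irreducible hP
    exact (isRelPrime_prod_X_pow hX _).dvd_of_dvd_mul_left hdvd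
  · have hdvd := map_dvd Polynomial.constantCoeff (map_dvd (finSuccEquiv K n)
      (h.dvd_alternant i.succ))
    have hcomp : (a ∘ i.succ.succAbove) ∘ Fin.succ = a ∘ Fin.succ ∘ i.succAbove := by
      funext s
      simp only [Function.comp_apply, Fin.succ_succAbove_succ]
    rw [Polynomial.constantCoeff_apply, Polynomial.constantCoeff_apply,
      coeff_zero_finSuccEquiv_alternant (ha.comp (Fin.strictMono_succAbove _)).injective ?_,
      hcomp, alternant_comp_succ_comp ha.monotone] at hdvd
    · exact (isRelPrime_prod_X_pow hXt _).dvd_of_dvd_mul_left hdvd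
    · rw [Function.comp_apply, Fin.succ_succAbove_zero, ha0]

theorem MinorFactorsDvdScaledDiff.succ [CharZero K] (hn : 2 ≤ n)
    (ih : MinorFactorsDvdScaledDiff K n) : MinorFactorsDvdScaledDiff K (n + 1) := by
  intro a ha ha0 P h
  by_contra hP
  obtain ⟨d, hd, hcoeff⟩ :=
    h.exists_coeff_single_coeff_zero_ne_zero ih ha ha0 hP ⟨0, by lia⟩
  obtain ⟨c, -, hc⟩ := isUnit_iff_eq_C_of_isReduced.1
    (h.isUnit_coeff_zero_finSuccEquiv hn ih ha ha0 hP)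
  rw [hc, coeff_C, if_neg (Finsupp.single_ne_zero.2 hd).symm] at hcoeff
  exact hcoeff rfl

theorem minorFactorsDvdScaledDiff_two [IsAlgClosed K] [CharZero K] :
    MinorFactorsDvdScaledDiff K 2 := by
  intro a ha ha0 P h
  have hpos : 0 < a 1 := (Nat.zero_le _).trans_lt (ha Fin.zero_lt_one)
  have : NeZero (a 1 : K) := ⟨Nat.cast_ne_zero.2 hpos.ne'⟩
  obtain ⟨ζ, hζ⟩ := HasEnoughRootsOfUnity.exists_primitiveRoot K (a 1)
  have hminor : alternant K (a ∘ Fin.succAbove 2) = X 1 ^ a 1 - X 0 ^ a 1 := by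
    have h0 : (2 : Fin 3).succAbove 0 = 0 := rfl
    have h1 : (2 : Fin 3).succAbove 1 = 1 := rfl
    simp [alternant, powerMatrix, Matrix.det_fin_two, h0, h1, ha0]
  have hdvd := h.dvd_alternant 2
  rw [hminor, (hζ.map_of_injective (C_injective (Fin 2) K)).pow_sub_pow_eq_prod_sub_mul _ _ hpos,
    h.irreducible.prime.dvd_finsetProd_iff] at hdvd
  obtain ⟨z, hz, hzP⟩ := hdvd
  obtain ⟨z, -, rfl⟩ := isUnit_iff_eq_C_of_isReduced.1
    (IsUnit.of_pow_eq_one ((Polynomial.mem_nthRootsFinset hpos _).1 hz) hpos.ne')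
  exact ⟨0, 1, zero_ne_one, z, hzP⟩

theorem minorFactorsDvdScaledDiff_of_lt_two (hn : n < 2) : MinorFactorsDvdScaledDiff K n := by
  intro a _ ha0 P h
  have hminor : alternant K (a ∘ (Fin.last n).succAbove) = 1 := by
    interval_cases n
    · exact Matrix.det_isEmpty
    · simp [alternant, powerMatrix, ha0]
  exact absurd (isUnit_of_dvd_one (hminor ▸ h.dvd_alternant _)) h.irreducible.not_isUnit

theorem minorFactorsDvdScaledDiff [IsAlgClosed K] [CharZero K] :
    MinorFactorsDvdScaledDiff K n := by
  obtain hn | hn := lt_or_ge n 2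
  · exact minorFactorsDvdScaledDiff_of_lt_two hn
  · exact Nat.le_induction minorFactorsDvdScaledDiff_two (fun _ => .succ) n hn

end Classification

section SchurQuotients

variable {K : Type*} [Field K] {n : ℕ} {a : Fin (n + 1) → ℕ}

theorem eq_one_of_forall_pow_eq_one {ι M : Type*} [Fintype ι] [Monoid M] {a : ι → ℕ}
    (hgcd : Finset.univ.gcd a = 1) {z : M} (h : ∀ i, z ^ a i = 1) : z = 1 := by
  rw [← orderOf_eq_one_iff, ← Nat.dvd_one, ← hgcd]
  exact Finset.dvd_gcd fun i _ => orderOf_dvd_of_pow_eq_one (h i)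

theorem isUnit_of_isUnit_map {σ R R' : Type*} [CommRing R] [CommRing R'] {f : R →+* R'}
    [IsLocalHom f] (hf : Function.Injective f) {Q : MvPolynomial σ R} (h : IsUnit (map f Q)) :
    IsUnit Q := by
  simpa only [MvPolynomial.isUnit_iff, coeff_map, isUnit_map_iff, IsNilpotent.map_iff hf] using h

theorem isRelPrime_of_vandermonde_mul_eq_alternant [IsAlgClosed K] [CharZero K]
    (ha : StrictMono a) (ha0 : a 0 = 0) (hgcd : Finset.univ.gcd a = 1)
    {i j : Fin (n + 1)} (hij : i ≠ j) {S S' : MvPolynomial (Fin n) K}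
    (hS : (Matrix.vandermonde X).det * S = alternant K (a ∘ i.succAbove))
    (hS' : (Matrix.vandermonde X).det * S' = alternant K (a ∘ j.succAbove)) :
    IsRelPrime S S' := by
  have hinj (k : Fin (n + 1)) : Function.Injective (a ∘ k.succAbove) :=
    ha.injective.comp Fin.succAbove_right_injective
  have hS0 : S ≠ 0 := right_ne_zero_of_mul (hS ▸ alternant_ne_zero (hinj i))
  refine WfDvdMonoid.isRelPrime_of_no_irreducible_factors (fun h => hS0 h.1) fun P hP hPS hPS' => ?_
  have hall := dvd_alternant_succAbove_of_dvd_of_dvd ha.injective hP hij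
    (hS ▸ hPS.mul_left _) (hS' ▸ hPS'.mul_left _)
  obtain ⟨p, q, hpq, z, hPl⟩ := minorFactorsDvdScaledDiff ha ha0 ⟨hP, hall⟩
  have hassoc := hP.associated_of_dvd (scaledDiff_irreducible hpq) hPl
  have hz : z = 1 := eq_one_of_forall_pow_eq_one hgcd fun k => by
    rw [pow_eq_pow_of_scaledDiff_dvd_alternant_succAbove ha.injective hpq
      (fun k => hassoc.dvd_iff_dvd_left.1 (hall k)) k 0, ha0, pow_zero]
  subst hz
  refine not_scaledDiff_sq_dvd_alternant (hinj i) hpq (one_ne_zero (α := K)) ?_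
  rw [← hS, sq, det_vandermonde_X_eq_alternant]
  exact mul_dvd_mul (scaledDiff_dvd_alternant hpq fun _ _ => by simp only [one_pow])
    (hassoc.dvd_iff_dvd_left.1 hPS)

theorem schur_polynomials_coprime_general [CharZero K]
    (ha : StrictMono a) (ha0 : a 0 = 0) (hgcd : Finset.univ.gcd a = 1)
    {i j : Fin (n + 1)} (hij : i ≠ j) {S S' : MvPolynomial (Fin n) K}
    (hS : (Matrix.vandermonde X).det * S = alternant K (a ∘ i.succAbove))
    (hS' : (Matrix.vandermonde X).det * S' = alternant K (a ∘ j.succAbove)) :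
    IsRelPrime S S' := by
  let φ := algebraMap K (AlgebraicClosure K)
  have hlift {T : MvPolynomial (Fin n) K} {k : Fin (n + 1)}
      (hT : (Matrix.vandermonde X).det * T = alternant K (a ∘ k.succAbove)) :
      (Matrix.vandermonde X).det * map φ T =
        alternant (AlgebraicClosure K) (a ∘ k.succAbove) := by
    rw [← map_alternant φ, ← hT, map_mul, det_vandermonde_X_eq_alternant,
      det_vandermonde_X_eq_alternant, map_alternant]
  have : CharZero (AlgebraicClosure K) := charZero_of_injective_algebraMap φ.injective
  have hrel := isRelPrime_of_vandermonde_mul_eq_alternant ha ha0 hgcd hij (hlift hS) (hlift hS')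
  exact fun d hd hd' => isUnit_of_isUnit_map φ.injective (hrel (map_dvd _ hd) (map_dvd _ hd'))

end SchurQuotients

theorem Vand_eq_det_vandermonde : Vand = (Matrix.vandermonde X).det := by
  simp [Vand, Matrix.det_vandermonde, Finset.prod_ite, Finset.filter_lt_eq_Ioi]

theorem genVandDet_eq_alternant (a b c : ℕ) : genVandDet a b c = alternant ℂ ![0, a, b, c] := by
  rw [genVandDet, alternant]
  congr 1
  ext1 p q
  fin_cases q <;> simp [powerMatrix]

/-- Coprimality of the two Schur polynomials.  If
`0 < i₁ < i₂ < i₃ < i₄` with `gcd(i₁,i₂,i₃,i₄) = 1` and `V·S = D_{i₁,i₂,i₃}`,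
`V·S' = D_{i₁,i₂,i₄}`, then `S` and `S'` are relatively prime. -/
theorem schur_polynomials_coprime
    (i1 i2 i3 i4 : ℕ) (h1 : 0 < i1) (h12 : i1 < i2) (h23 : i2 < i3) (h34 : i3 < i4)
    (hgcd : Nat.gcd (Nat.gcd (Nat.gcd i1 i2) i3) i4 = 1)
    (S S' : MvPolynomial (Fin 4) ℂ)
    (hS : Vand * S = genVandDet i1 i2 i3)
    (hS' : Vand * S' = genVandDet i1 i2 i4) :
    IsRelPrime S S' := by
  have ha : StrictMono ![0, i1, i2, i3, i4] := by
    simp [Fin.strictMono_iff_lt_succ, Fin.forall_fin_succ, *]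
  have hgcd' : Finset.univ.gcd ![0, i1, i2, i3, i4] = 1 := by
    simp [Fin.univ_succ, ← hgcd, Nat.gcd_assoc, gcd_eq_nat_gcd]
  rw [Vand_eq_det_vandermonde, genVandDet_eq_alternant] at hS hS'
  refine schur_polynomials_coprime_general ha rfl hgcd' (i := 4) (j := 3) (by decide) ?_ ?_
  · exact hS.trans (congrArg _ (by funext s; fin_cases s <;> rfl))
  · exact hS'.trans (congrArg _ (by funext s; fin_cases s <;> rfl))
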